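/- (Fourth version of Peano's Theorem, part 3: Peano's characterizations.) Let t0, y0 ∈ ℝ, a > 0, I = [t0, t0+a], let f : I × ℝ → ℝ be continuous, and suppose the problem y' = f(t,y), y(t0) = y0 has a strict lower solution and a strict upper solution on I. Then the problem has a least solution φ_* : I → ℝ and a greatest solution φ^* : I → ℝ (i.e., every solution φ : I → ℝ satisfies φ_* ≤ φ ≤ φ^* on I), and for every t ∈ I: φ_*(t) = sup{ γ(t) : γ is a strict lower solution of the problem on I } and φ^*(t) = inf{ γ(t) : γ is a strict upper solution of the problem on I }. -/

import Mathlib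

open Set

/-- `γ` is a strict lower solution of `y' = f(t,y)`, `y t0 = y0` on `[t0, t0+a]`. -/
def IsStrictLowerSol (t0 y0 a : ℝ) (f : ℝ → ℝ → ℝ) (γ : ℝ → ℝ) : Prop :=
  ∃ γ' : ℝ → ℝ,
    (∀ t ∈ Icc t0 (t0 + a), HasDerivWithinAt γ (γ' t) (Icc t0 (t0 + a)) t) ∧
    ContinuousOn γ' (Icc t0 (t0 + a)) ∧ γ t0 ≤ y0 ∧
    ∀ t ∈ Icc t0 (t0 + a), γ' t < f t (γ t)

/-- `γ` is a strict upper solution of `y' = f(t,y)`, `y t0 = y0` on `[t0, t0+a]`. -/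
def IsStrictUpperSol (t0 y0 a : ℝ) (f : ℝ → ℝ → ℝ) (γ : ℝ → ℝ) : Prop :=
  ∃ γ' : ℝ → ℝ,
    (∀ t ∈ Icc t0 (t0 + a), HasDerivWithinAt γ (γ' t) (Icc t0 (t0 + a)) t) ∧
    ContinuousOn γ' (Icc t0 (t0 + a)) ∧ y0 ≤ γ t0 ∧
    ∀ t ∈ Icc t0 (t0 + a), f t (γ t) < γ' t

/-- `φ` is a solution of `y' = f(t,y)`, `y t0 = y0` on `[t0, t0+a]`. -/
def IsSol18 (t0 y0 a : ℝ) (f : ℝ → ℝ → ℝ) (φ : ℝ → ℝ) : Prop :=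
  φ t0 = y0 ∧
    ∀ t ∈ Icc t0 (t0 + a), HasDerivWithinAt φ (f t (φ t)) (Icc t0 (t0 + a)) t

/-!
A strict lower solution stays below a strict upper solution, since at a contact point the upper one
has the larger slope; solutions are trapped between the two kinds. It is therefore enough to find
strict upper solutions decreasing to a solution: the limit dominates every solution and is the
infimum of the strict upper solutions.

To find them, extend `f` from the region between `α` and `β` to a bounded continuous field `F`, take
`εₙ` decreasing to `0`, and solve `y' = Gₙ(t, y)` for smooth fields with `F + εₙ₊₁ < Gₙ < F + εₙ`.
Each solution `γₙ` is a strict upper solution for `F`, the sequence decreases, and for small `ε₀` it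
stays between `α` and `β`. Passing to the limit in the integral equation, its limit solves
`y' = F(t, y)`. Strict lower solutions are handled by the reflection `y ↦ -y`.
-/

open Filter Function Topology
open scoped BoundedContinuousFunction NNReal

section Region

variable {X : Type*}

/-- The points lying over `s`, on or between the graphs of `u` and `v`. A field is assumed
continuous only on such a region, for `u` a lower and `v` an upper solution. Mathlib's
`regionBetween` is the variant without the graphs. -/
def closedRegionBetween (u v : X → ℝ) (s : Set X) : Set (X × ℝ) :=
  {p | p.1 ∈ s ∧ p.2 ∈ Icc (u p.1) (v p.1)}

lemma isCompact_closedRegionBetween [TopologicalSpace X] [T2Space X] {u v : X → ℝ} {s : Set X}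
    (hs : IsCompact s) (hu : ContinuousOn u s) (hv : ContinuousOn v s) :
    IsCompact (closedRegionBetween u v s) := by
  obtain ⟨m, hm⟩ := hs.bddBelow_image hu
  obtain ⟨M, hM⟩ := hs.bddAbove_image hv
  have hfst : MapsTo Prod.fst (s ×ˢ Icc m M) s := fun _ hp => hp.1
  have hbox : IsCompact (s ×ˢ Icc m M) := hs.prod isCompact_Icc
  have hle := hbox.isClosed.isClosed_le (hu.comp continuousOn_fst hfst) continuousOn_snd
  have hge := hbox.isClosed.isClosed_le continuousOn_snd (hv.comp continuousOn_fst hfst)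
  convert (hbox.of_isClosed_subset hle (sep_subset _ _)).inter_right hge using 1
  ext p
  constructor
  · rintro ⟨hps, hup, hpv⟩
    have hp : p ∈ s ×ˢ Icc m M :=
      ⟨hps, (hm (mem_image_of_mem u hps)).trans hup, hpv.trans (hM (mem_image_of_mem v hps))⟩
    exact ⟨⟨hp, hup⟩, hp, hpv⟩
  · rintro ⟨⟨hp, hup⟩, -, hpv⟩
    exact ⟨hp.1, hup, hpv⟩

end Region

lemma exists_boundedContinuousFunction_eqOn {X : Type*} [TopologicalSpace X] [T4Space X]
    {s : Set X} (hs : IsCompact s) {f : X → ℝ} (hf : ContinuousOn f s) :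
    ∃ F : X →ᵇ ℝ, EqOn F f s := by
  have : CompactSpace s := isCompact_iff_compactSpace.mp hs
  obtain ⟨F, -, hF⟩ := BoundedContinuousFunction.exists_norm_eq_domRestrict_eq_of_closed
    (BoundedContinuousFunction.mkOfCompact ⟨s.domRestrict f, hf.domRestrict⟩) hs.isClosed
  exact ⟨F, fun x hx => DFunLike.congr_fun hF ⟨x, hx⟩⟩

lemma exists_locallyLipschitz_sub_mem_Ioo {E : Type*} [NormedAddCommGroup E] [NormedSpace ℝ E]
    [FiniteDimensional ℝ E] (F : E →ᵇ ℝ) {lo hi : ℝ} (h : lo < hi) :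
    ∃ G : E →ᵇ ℝ, LocallyLipschitz G ∧ ∀ x, G x - F x ∈ Ioo lo hi := by
  obtain ⟨g, hg, hgF, -⟩ := Continuous.exists_contDiff_approx (f := fun x => F x + (lo + hi) / 2)
    (ε := fun _ => (hi - lo) / 2) 1 (by fun_prop) (by fun_prop) fun _ => by linarith
  have hmem (x : E) : g x - F x ∈ Ioo lo hi := by
    have := abs_lt.mp (hgF x)
    constructor <;> linarith
  have hbound (x : E) : ‖g x‖ ≤ ‖F‖ + max |lo| |hi| := calc
    ‖g x‖ = ‖F x + (g x - F x)‖ := by rw [add_sub_cancel]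
    _ ≤ ‖F x‖ + |g x - F x| := norm_add_le _ _
    _ ≤ ‖F‖ + max |lo| |hi| :=
      add_le_add (F.norm_coe_le_norm x) (abs_le_max_abs_abs (hmem x).1.le (hmem x).2.le)
  exact ⟨.ofNormedAddCommGroup g hg.continuous _ hbound, hg.locallyLipschitz, hmem⟩

lemma exists_forall_norm_le_of_tendsto {X E : Type*} [TopologicalSpace X]
    [SeminormedAddCommGroup E] {G : ℕ → X →ᵇ E} {F : X →ᵇ E} (hG : Tendsto G atTop (𝓝 F)) :
    ∃ C : ℝ≥0, ∀ n x, ‖G n x‖₊ ≤ C := by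
  obtain ⟨C, -, hC⟩ := (Metric.isBounded_range_of_tendsto G hG).exists_pos_norm_le
  refine ⟨C.toNNReal, fun n x => NNReal.coe_le_coe.mp ?_⟩
  exact (((G n).norm_coe_le_norm x).trans (hC _ (mem_range_self n))).trans (Real.le_coe_toNNReal C)

section VectorField

variable {E : Type*} [NormedAddCommGroup E] [NormedSpace ℝ E] {a b : ℝ}

lemma exists_hasDerivWithinAt_Icc_of_locallyLipschitz [ProperSpace E] {G : ℝ × E →ᵇ E}
    (hG : LocallyLipschitz G) (hab : a ≤ b) (x₀ : E) :
    ∃ γ : ℝ → E, γ a = x₀ ∧ ∀ t ∈ Icc a b, HasDerivWithinAt γ (G (t, γ t)) (Icc a b) t := by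
  -- A solution has speed at most `‖G‖`, so it cannot leave the ball of radius `‖G‖ * (b - a)`.
  let r : ℝ≥0 := ‖G‖₊ * (b - a).toNNReal
  obtain ⟨K, hK⟩ := hG.locallyLipschitzOn.exists_lipschitzOnWith_of_compact
    (isCompact_Icc.prod (isCompact_closedBall x₀ r) : IsCompact (Icc a b ×ˢ _))
  have hPL : IsPicardLindelof (fun t x => G (t, x)) (⟨a, left_mem_Icc.mpr hab⟩ : Icc a b) x₀
      r 0 ‖G‖₊ K :=
    { lipschitzOnWith := fun t ht => by
        have hmaps : MapsTo (Prod.mk t) (Metric.closedBall x₀ r)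
            (Icc a b ×ˢ Metric.closedBall x₀ r) := fun x hx => ⟨ht, hx⟩
        simpa [Function.comp_def] using
          hK.comp (LipschitzWith.prodMk_left t).lipschitzOnWith hmaps
      continuousOn := fun x _ => by fun_prop
      norm_le := fun t _ x _ => G.norm_coe_le_norm (t, x)
      mul_max_le := by simp [r, hab] }
  exact hPL.exists_eq_forall_mem_Icc_hasDerivWithinAt₀

lemma tendsto_integral_comp_of_tendsto {G : ℕ → ℝ × E →ᵇ E} {F : ℝ × E →ᵇ E}
    (hG : Tendsto G atTop (𝓝 F)) {γ : ℕ → ℝ → E} {φ : ℝ → E}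
    (hγ : ∀ n, ContinuousOn (γ n) (uIcc a b))
    (hlim : ∀ t ∈ uIcc a b, Tendsto (γ · t) atTop (𝓝 (φ t))) :
    Tendsto (fun n => ∫ t in a..b, G n (t, γ n t)) atTop (𝓝 (∫ t in a..b, F (t, φ t))) := by
  obtain ⟨C, hC⟩ := exists_forall_norm_le_of_tendsto hG
  refine intervalIntegral.tendsto_integral_filter_of_dominated_convergence (fun _ => (C : ℝ))
    (.of_forall fun n => ?_) (.of_forall fun n => .of_forall fun t _ => hC n (t, γ n t))
    intervalIntegrable_const (.of_forall fun t ht => ?_)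
  · have hGγ : ContinuousOn (fun t => G n (t, γ n t)) (uIcc a b) :=
      (G n).continuous.comp_continuousOn (continuousOn_id.prodMk (hγ n))
    exact (hGγ.mono uIoc_subset_uIcc).aestronglyMeasurable measurableSet_uIoc
  · exact (BoundedContinuousFunction.tendsto_iff_tendstoUniformly.mp hG).tendsto_comp
      F.continuous.continuousAt
      (tendsto_const_nhds.prodMk_nhds (hlim t (uIoc_subset_uIcc ht)))

lemma hasDerivWithinAt_Icc_of_tendsto [CompleteSpace E]
    {G : ℕ → ℝ × E →ᵇ E} {F : ℝ × E →ᵇ E} (hG : Tendsto G atTop (𝓝 F))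
    {γ : ℕ → ℝ → E} {φ : ℝ → E}
    (hγ : ∀ n, ∀ t ∈ Icc a b, HasDerivWithinAt (γ n) (G n (t, γ n t)) (Icc a b) t)
    (hlim : ∀ t ∈ Icc a b, Tendsto (γ · t) atTop (𝓝 (φ t))) :
    ∀ t ∈ Icc a b, HasDerivWithinAt φ (F (t, φ t)) (Icc a b) t := by
  intro t ht
  have ha : a ∈ Icc a b := left_mem_Icc.mpr (ht.1.trans ht.2)
  obtain ⟨C, hC⟩ := exists_forall_norm_le_of_tendsto hG
  have hφ : ContinuousOn φ (Icc a b) := by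
    refine Tendsto.continuousOn_of_equicontinuousOn hlim
      (LipschitzOnWith.uniformEquicontinuousOn γ C fun n => ?_).equicontinuousOn
    exact (convex_Icc a b).lipschitzOnWith_of_nnnorm_hasDerivWithin_le (hγ n) fun s _ => hC n _
  have hpicard : ∀ s ∈ Icc a b, φ s = ODE.picard (curry F) a (φ a) φ s := by
    intro s hs
    have hsub : uIcc a s ⊆ Icc a b := uIcc_subset_Icc ha hs
    have hγs (n : ℕ) : γ n a + ∫ τ in a..s, G n (τ, γ n τ) = γ n s :=
      ODE.picard_eq_of_hasDerivAt (f := curry (G n)) (u := univ) (G n).continuous.continuousOn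
        (fun τ hτ => (hγ n τ (hsub hτ)).mono hsub) (mapsTo_univ _ _)
    have hint := tendsto_integral_comp_of_tendsto hG
      (fun n => (HasDerivWithinAt.continuousOn (hγ n)).mono hsub) fun τ hτ => hlim τ (hsub hτ)
    exact tendsto_nhds_unique (hlim s hs) (((hlim a ha).add hint).congr hγs)
  exact (ODE.hasDerivWithinAt_picard_Icc ha (f := curry F) (u := univ)
    F.continuous.continuousOn hφ (fun _ _ => mem_univ _) (φ a) ht).congr hpicard (hpicard t ht)

end VectorField

lemma image_le_of_hasDerivWithinAt_lt_of_eq {a b : ℝ} {u u' v v' : ℝ → ℝ}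
    (hu : ∀ t ∈ Icc a b, HasDerivWithinAt u (u' t) (Icc a b) t)
    (hv : ∀ t ∈ Icc a b, HasDerivWithinAt v (v' t) (Icc a b) t)
    (ha : u a ≤ v a) (h : ∀ t ∈ Icc a b, u t = v t → u' t < v' t) :
    ∀ t ∈ Icc a b, u t ≤ v t := by
  have hright {w w' : ℝ → ℝ} (hw : ∀ t ∈ Icc a b, HasDerivWithinAt w (w' t) (Icc a b) t) :
      ∀ t ∈ Ico a b, HasDerivWithinAt w (w' t) (Ici t) t := fun t ht =>
    (hw t (Ico_subset_Icc_self ht)).mono_of_mem_nhdsWithin (Icc_mem_nhdsGE_of_mem ht)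
  exact image_le_of_deriv_right_lt_deriv_boundary' (HasDerivWithinAt.continuousOn hu) (hright hu)
    ha (HasDerivWithinAt.continuousOn hv) (hright hv) fun t ht => h t (Ico_subset_Icc_self ht)

section StrictSolutions

variable {t0 y0 a : ℝ} {f g : ℝ → ℝ → ℝ} {α β φ : ℝ → ℝ}

lemma IsStrictLowerSol.continuousOn (hα : IsStrictLowerSol t0 y0 a f α) :
    ContinuousOn α (Icc t0 (t0 + a)) :=
  let ⟨_, hα', _⟩ := hα
  HasDerivWithinAt.continuousOn hα'

lemma IsStrictUpperSol.continuousOn (hβ : IsStrictUpperSol t0 y0 a f β) :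
    ContinuousOn β (Icc t0 (t0 + a)) :=
  let ⟨_, hβ', _⟩ := hβ
  HasDerivWithinAt.continuousOn hβ'

lemma IsSol18.continuousOn (hφ : IsSol18 t0 y0 a f φ) : ContinuousOn φ (Icc t0 (t0 + a)) :=
  HasDerivWithinAt.continuousOn hφ.2

lemma IsStrictLowerSol.mono_field (hα : IsStrictLowerSol t0 y0 a f α)
    (hfg : ∀ t ∈ Icc t0 (t0 + a), f t (α t) ≤ g t (α t)) : IsStrictLowerSol t0 y0 a g α := by
  obtain ⟨α', hα', hcont, hα0, hlt⟩ := hα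
  exact ⟨α', hα', hcont, hα0, fun t ht => (hlt t ht).trans_le (hfg t ht)⟩

lemma IsStrictUpperSol.anti_field (hβ : IsStrictUpperSol t0 y0 a f β)
    (hgf : ∀ t ∈ Icc t0 (t0 + a), g t (β t) ≤ f t (β t)) : IsStrictUpperSol t0 y0 a g β := by
  obtain ⟨β', hβ', hcont, hβ0, hlt⟩ := hβ
  exact ⟨β', hβ', hcont, hβ0, fun t ht => (hgf t ht).trans_lt (hlt t ht)⟩

lemma IsSol18.congr_field (hφ : IsSol18 t0 y0 a f φ)
    (hfg : ∀ t ∈ Icc t0 (t0 + a), f t (φ t) = g t (φ t)) : IsSol18 t0 y0 a g φ :=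
  ⟨hφ.1, fun t ht => hfg t ht ▸ hφ.2 t ht⟩

lemma IsSol18.isStrictLowerSol (hφ : IsSol18 t0 y0 a f φ)
    (hf : ContinuousOn (fun t => f t (φ t)) (Icc t0 (t0 + a)))
    (hfg : ∀ t ∈ Icc t0 (t0 + a), f t (φ t) < g t (φ t)) : IsStrictLowerSol t0 y0 a g φ :=
  ⟨fun t => f t (φ t), hφ.2, hf, hφ.1.le, hfg⟩

lemma IsSol18.isStrictUpperSol (hφ : IsSol18 t0 y0 a f φ)
    (hf : ContinuousOn (fun t => f t (φ t)) (Icc t0 (t0 + a)))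
    (hgf : ∀ t ∈ Icc t0 (t0 + a), g t (φ t) < f t (φ t)) : IsStrictUpperSol t0 y0 a g φ :=
  ⟨fun t => f t (φ t), hφ.2, hf, hφ.1.ge, hgf⟩

lemma IsStrictLowerSol.le_isStrictUpperSol (hα : IsStrictLowerSol t0 y0 a f α)
    (hβ : IsStrictUpperSol t0 y0 a f β) : ∀ t ∈ Icc t0 (t0 + a), α t ≤ β t := by
  obtain ⟨α', hα', -, hα0, hαf⟩ := hα
  obtain ⟨β', hβ', -, hβ0, hfβ⟩ := hβ
  refine image_le_of_hasDerivWithinAt_lt_of_eq hα' hβ' (hα0.trans hβ0) fun t ht heq => ?_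
  exact (hαf t ht).trans (heq ▸ hfβ t ht)

lemma IsSol18.le_isStrictUpperSol (hφ : IsSol18 t0 y0 a f φ)
    (hβ : IsStrictUpperSol t0 y0 a f β) : ∀ t ∈ Icc t0 (t0 + a), φ t ≤ β t := by
  obtain ⟨β', hβ', -, hβ0, hfβ⟩ := hβ
  refine image_le_of_hasDerivWithinAt_lt_of_eq hφ.2 hβ' (hφ.1.trans_le hβ0) fun t ht heq => ?_
  exact heq ▸ hfβ t ht

lemma IsStrictLowerSol.le_isSol (hα : IsStrictLowerSol t0 y0 a f α)
    (hφ : IsSol18 t0 y0 a f φ) : ∀ t ∈ Icc t0 (t0 + a), α t ≤ φ t := by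
  obtain ⟨α', hα', -, hα0, hαf⟩ := hα
  refine image_le_of_hasDerivWithinAt_lt_of_eq hα' hφ.2 (hα0.trans_eq hφ.1.symm) fun t ht heq => ?_
  exact heq ▸ hαf t ht

lemma IsStrictUpperSol.exists_pos_add (hβ : IsStrictUpperSol t0 y0 a f β)
    (hf : ContinuousOn (fun t => f t (β t)) (Icc t0 (t0 + a))) :
    ∃ δ > 0, IsStrictUpperSol t0 y0 a (fun t y => f t y + δ) β := by
  obtain ⟨β', hβ', hcont, hβ0, hlt⟩ := hβ
  obtain ⟨c, hc, hcβ⟩ := isCompact_Icc.exists_forall_le' (hcont.sub hf)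
    fun t ht => sub_pos.mpr (hlt t ht)
  refine ⟨c / 2, half_pos hc, β', hβ', hcont, hβ0, fun t ht => ?_⟩
  have hgap : c ≤ β' t - f t (β t) := hcβ t ht
  linarith

lemma IsSol18.isLUB_of_tendsto (hφ : IsSol18 t0 y0 a f φ) {γ : ℕ → ℝ → ℝ}
    (hγ : ∀ n, IsStrictLowerSol t0 y0 a f (γ n)) {t : ℝ} (ht : t ∈ Icc t0 (t0 + a))
    (hlim : Tendsto (γ · t) atTop (𝓝 (φ t))) :
    IsLUB {x | ∃ γ : ℝ → ℝ, IsStrictLowerSol t0 y0 a f γ ∧ x = γ t} (φ t) := by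
  constructor
  · rintro _ ⟨η, hη, rfl⟩
    exact hη.le_isSol hφ t ht
  · exact fun x hx => le_of_tendsto' hlim fun n => hx ⟨γ n, hγ n, rfl⟩

lemma IsSol18.isGLB_of_tendsto (hφ : IsSol18 t0 y0 a f φ) {γ : ℕ → ℝ → ℝ}
    (hγ : ∀ n, IsStrictUpperSol t0 y0 a f (γ n)) {t : ℝ} (ht : t ∈ Icc t0 (t0 + a))
    (hlim : Tendsto (γ · t) atTop (𝓝 (φ t))) :
    IsGLB {x | ∃ γ : ℝ → ℝ, IsStrictUpperSol t0 y0 a f γ ∧ x = γ t} (φ t) := by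
  constructor
  · rintro _ ⟨η, hη, rfl⟩
    exact hφ.le_isStrictUpperSol hη t ht
  · exact fun x hx => ge_of_tendsto' hlim fun n => hx ⟨γ n, hγ n, rfl⟩

lemma IsStrictLowerSol.neg (hα : IsStrictLowerSol t0 y0 a f α) :
    IsStrictUpperSol t0 (-y0) a (fun t y => -f t (-y)) (fun t => -α t) := by
  obtain ⟨α', hα', hcont, hα0, hlt⟩ := hα
  exact ⟨fun t => -α' t, fun t ht => (hα' t ht).neg, hcont.neg, neg_le_neg hα0,
    fun t ht => by simpa using hlt t ht⟩

lemma IsStrictUpperSol.neg (hβ : IsStrictUpperSol t0 y0 a f β) :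
    IsStrictLowerSol t0 (-y0) a (fun t y => -f t (-y)) (fun t => -β t) := by
  obtain ⟨β', hβ', hcont, hβ0, hlt⟩ := hβ
  exact ⟨fun t => -β' t, fun t ht => (hβ' t ht).neg, hcont.neg, neg_le_neg hβ0,
    fun t ht => by simpa using hlt t ht⟩

lemma IsSol18.neg (hφ : IsSol18 t0 y0 a f φ) :
    IsSol18 t0 (-y0) a (fun t y => -f t (-y)) (fun t => -φ t) :=
  ⟨neg_inj.mpr hφ.1, fun t ht => by simpa using (hφ.2 t ht).fun_neg⟩

end StrictSolutions

section Existence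

variable {t0 y0 a : ℝ}

lemma exists_isStrictLowerSol (F : ℝ × ℝ →ᵇ ℝ) : ∃ α, IsStrictLowerSol t0 y0 a (curry F) α := by
  refine ⟨fun t => y0 - (‖F‖ + 1) * (t - t0), fun _ => -(‖F‖ + 1), fun t _ => ?_,
    continuousOn_const, by simp, fun t _ => ?_⟩
  · have hlinear := ((hasDerivAt_id t).sub_const t0).const_mul (‖F‖ + 1)
    simpa using (hlinear.const_sub y0).hasDerivWithinAt
  · have hF := F.norm_coe_le_norm (t, y0 - (‖F‖ + 1) * (t - t0))
    rw [curry_apply]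
    linarith [(abs_le.mp hF).1]

lemma exists_isSol_strict_between (ha : 0 ≤ a) (F : ℝ × ℝ →ᵇ ℝ) {lo hi : ℝ} (h : lo < hi) :
    ∃ (G : ℝ × ℝ →ᵇ ℝ) (γ : ℝ → ℝ), (∀ p, G p - F p ∈ Ioo lo hi) ∧
      IsSol18 t0 y0 a (curry G) γ ∧
      IsStrictUpperSol t0 y0 a (fun t y => F (t, y) + lo) γ ∧
      IsStrictLowerSol t0 y0 a (fun t y => F (t, y) + hi) γ := by
  obtain ⟨G, hG, hGF⟩ := exists_locallyLipschitz_sub_mem_Ioo F h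
  obtain ⟨γ, hγ⟩ := exists_hasDerivWithinAt_Icc_of_locallyLipschitz hG
    (le_add_of_nonneg_right ha) y0
  have hγsol : IsSol18 t0 y0 a (curry G) γ := hγ
  have hcont : ContinuousOn (fun t => curry G t (γ t)) (Icc t0 (t0 + a)) :=
    G.continuous.comp_continuousOn (continuousOn_id.prodMk hγsol.continuousOn)
  exact ⟨G, γ, hGF, hγsol,
    hγsol.isStrictUpperSol hcont fun t _ => lt_sub_iff_add_lt'.mp (hGF (t, γ t)).1,
    hγsol.isStrictLowerSol hcont fun t _ => sub_lt_iff_lt_add'.mp (hGF (t, γ t)).2⟩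

lemma exists_isSol_tendsto_isStrictUpperSol_of_bounded (ha : 0 ≤ a) (F : ℝ × ℝ →ᵇ ℝ) {δ : ℝ}
    (hδ : 0 < δ) :
    ∃ (φ : ℝ → ℝ) (γ : ℕ → ℝ → ℝ), IsSol18 t0 y0 a (curry F) φ ∧
      (∀ n, IsStrictUpperSol t0 y0 a (curry F) (γ n)) ∧
      (∀ n, IsStrictLowerSol t0 y0 a (fun t y => F (t, y) + δ) (γ n)) ∧
      ∀ t ∈ Icc t0 (t0 + a), Tendsto (γ · t) atTop (𝓝 (φ t)) := by
  obtain ⟨ε, hε_anti, hε_mem, hε_lim⟩ := exists_seq_strictAnti_tendsto' hδ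
  choose G γ hGF hγsol hγup hγlow using fun n =>
    exists_isSol_strict_between (t0 := t0) (y0 := y0) ha F (hε_anti (Nat.lt_succ_self n))
  have hupper (n : ℕ) : IsStrictUpperSol t0 y0 a (curry F) (γ n) :=
    (hγup n).anti_field fun t _ => le_add_of_nonneg_right (hε_mem (n + 1)).1.le
  have hlower (n : ℕ) : IsStrictLowerSol t0 y0 a (fun t y => F (t, y) + δ) (γ n) :=
    (hγlow n).mono_field fun t _ => add_le_add_right (hε_mem n).2.le _
  have hanti : ∀ t ∈ Icc t0 (t0 + a), Antitone (γ · t) := fun t ht =>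
    antitone_nat_of_succ_le fun n => (hγlow (n + 1)).le_isStrictUpperSol (hγup n) t ht
  obtain ⟨α, hα⟩ := exists_isStrictLowerSol (t0 := t0) (y0 := y0) (a := a) F
  have hbdd : ∀ t ∈ Icc t0 (t0 + a), BddBelow (range (γ · t)) := fun t ht =>
    ⟨α t, forall_mem_range.mpr fun n => hα.le_isStrictUpperSol (hupper n) t ht⟩
  have hlim : ∀ t ∈ Icc t0 (t0 + a), Tendsto (γ · t) atTop (𝓝 (⨅ n, γ n t)) := fun t ht =>
    tendsto_atTop_ciInf (hanti t ht) (hbdd t ht)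
  have hG : Tendsto G atTop (𝓝 F) := by
    refine tendsto_iff_dist_tendsto_zero.mpr
      (squeeze_zero (fun _ => dist_nonneg) (fun n => ?_) hε_lim)
    refine (BoundedContinuousFunction.dist_le (hε_mem n).1.le).mpr fun p => ?_
    have hpos : 0 < G n p - F p := (hε_mem (n + 1)).1.trans (hGF n p).1
    exact (abs_of_pos hpos).trans_le (hGF n p).2.le
  have h0 : t0 ∈ Icc t0 (t0 + a) := left_mem_Icc.mpr (le_add_of_nonneg_right ha)
  have hφ0 : ⨅ n, γ n t0 = y0 :=
    tendsto_nhds_unique (hlim t0 h0) (tendsto_const_nhds.congr fun n => (hγsol n).1.symm)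
  exact ⟨fun t => ⨅ n, γ n t, γ,
    ⟨hφ0, hasDerivWithinAt_Icc_of_tendsto hG (fun n => (hγsol n).2) hlim⟩, hupper, hlower, hlim⟩

variable {f : ℝ → ℝ → ℝ} {α β : ℝ → ℝ}

theorem exists_isSol_tendsto_isStrictUpperSol (ha : 0 ≤ a)
    (hf : ContinuousOn (fun p : ℝ × ℝ => f p.1 p.2) (closedRegionBetween α β (Icc t0 (t0 + a))))
    (hα : IsStrictLowerSol t0 y0 a f α) (hβ : IsStrictUpperSol t0 y0 a f β) :
    ∃ (φ : ℝ → ℝ) (γ : ℕ → ℝ → ℝ), IsSol18 t0 y0 a f φ ∧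
      (∀ n, IsStrictUpperSol t0 y0 a f (γ n)) ∧
      ∀ t ∈ Icc t0 (t0 + a), Tendsto (γ · t) atTop (𝓝 (φ t)) := by
  obtain ⟨F, hF⟩ := exists_boundedContinuousFunction_eqOn
    (isCompact_closedRegionBetween isCompact_Icc hα.continuousOn hβ.continuousOn) hf
  have hFf : ∀ t ∈ Icc t0 (t0 + a), ∀ y ∈ Icc (α t) (β t), F (t, y) = f t y :=
    fun t ht y hy => hF (show (t, y) ∈ closedRegionBetween α β _ from ⟨ht, hy⟩)
  have hαβ := hα.le_isStrictUpperSol hβ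
  have hαF : IsStrictLowerSol t0 y0 a (curry F) α :=
    hα.mono_field fun t ht => (hFf t ht _ (left_mem_Icc.mpr (hαβ t ht))).ge
  have hβF : IsStrictUpperSol t0 y0 a (curry F) β :=
    hβ.anti_field fun t ht => (hFf t ht _ (right_mem_Icc.mpr (hαβ t ht))).le
  obtain ⟨δ, hδ, hβδ⟩ := hβF.exists_pos_add
    (F.continuous.comp_continuousOn (continuousOn_id.prodMk hβ.continuousOn))
  obtain ⟨φ, γ, hφ, hupper, hlower, hlim⟩ :=
    exists_isSol_tendsto_isStrictUpperSol_of_bounded (t0 := t0) (y0 := y0) ha F hδ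
  have hγ (n : ℕ) : ∀ t ∈ Icc t0 (t0 + a), γ n t ∈ Icc (α t) (β t) := fun t ht =>
    ⟨hαF.le_isStrictUpperSol (hupper n) t ht, (hlower n).le_isStrictUpperSol hβδ t ht⟩
  refine ⟨φ, γ, hφ.congr_field fun t ht => hFf t ht _ ?_, fun n => ?_, hlim⟩
  · exact isClosed_Icc.mem_of_tendsto (hlim t ht) (.of_forall fun n => hγ n t ht)
  · exact (hupper n).anti_field fun t ht => (hFf t ht _ (hγ n t ht)).ge

theorem exists_isSol_tendsto_isStrictLowerSol (ha : 0 ≤ a)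
    (hf : ContinuousOn (fun p : ℝ × ℝ => f p.1 p.2) (closedRegionBetween α β (Icc t0 (t0 + a))))
    (hα : IsStrictLowerSol t0 y0 a f α) (hβ : IsStrictUpperSol t0 y0 a f β) :
    ∃ (φ : ℝ → ℝ) (γ : ℕ → ℝ → ℝ), IsSol18 t0 y0 a f φ ∧
      (∀ n, IsStrictLowerSol t0 y0 a f (γ n)) ∧
      ∀ t ∈ Icc t0 (t0 + a), Tendsto (γ · t) atTop (𝓝 (φ t)) := by
  have hmaps : MapsTo (fun p : ℝ × ℝ => (p.1, -p.2))
      (closedRegionBetween (fun t => -β t) (fun t => -α t) (Icc t0 (t0 + a)))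
      (closedRegionBetween α β (Icc t0 (t0 + a))) :=
    fun p hp => ⟨hp.1, le_neg.mp hp.2.2, neg_le.mp hp.2.1⟩
  obtain ⟨φ, γ, hφ, hγ, hlim⟩ := exists_isSol_tendsto_isStrictUpperSol ha
    (hf.comp (by fun_prop) hmaps).neg hβ.neg hα.neg
  exact ⟨fun t => -φ t, fun n t => -γ n t, by simpa using hφ.neg,
    fun n => by simpa using (hγ n).neg, fun t ht => (hlim t ht).neg⟩

end Existence

theorem peano_characterizations_general (t0 y0 a : ℝ) (ha : 0 ≤ a) (f : ℝ → ℝ → ℝ) (α β : ℝ → ℝ)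
    (hf : ContinuousOn (fun p : ℝ × ℝ => f p.1 p.2) (closedRegionBetween α β (Icc t0 (t0 + a))))
    (hα : IsStrictLowerSol t0 y0 a f α) (hβ : IsStrictUpperSol t0 y0 a f β) :
    ∃ φlow φhigh : ℝ → ℝ,
      IsSol18 t0 y0 a f φlow ∧ IsSol18 t0 y0 a f φhigh ∧
      (∀ φ : ℝ → ℝ, IsSol18 t0 y0 a f φ →
        ∀ t ∈ Icc t0 (t0 + a), φlow t ≤ φ t ∧ φ t ≤ φhigh t) ∧
      (∀ t ∈ Icc t0 (t0 + a),
        φlow t = sSup {x : ℝ | ∃ γ : ℝ → ℝ, IsStrictLowerSol t0 y0 a f γ ∧ x = γ t}) ∧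
      (∀ t ∈ Icc t0 (t0 + a),
        φhigh t = sInf {x : ℝ | ∃ γ : ℝ → ℝ, IsStrictUpperSol t0 y0 a f γ ∧ x = γ t}) := by
  obtain ⟨φlow, l, hφlow, hl, hl_lim⟩ := exists_isSol_tendsto_isStrictLowerSol ha hf hα hβ
  obtain ⟨φhigh, u, hφhigh, hu, hu_lim⟩ := exists_isSol_tendsto_isStrictUpperSol ha hf hα hβ
  refine ⟨φlow, φhigh, hφlow, hφhigh, fun φ hφ t ht => ⟨?_, ?_⟩, fun t ht => ?_, fun t ht => ?_⟩
  · exact le_of_tendsto' (hl_lim t ht) fun n => (hl n).le_isSol hφ t ht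
  · exact ge_of_tendsto' (hu_lim t ht) fun n => hφ.le_isStrictUpperSol (hu n) t ht
  · exact ((hφlow.isLUB_of_tendsto hl ht (hl_lim t ht)).csSup_eq ⟨_, α, hα, rfl⟩).symm
  · exact ((hφhigh.isGLB_of_tendsto hu ht (hu_lim t ht)).csInf_eq ⟨_, β, hβ, rfl⟩).symm

/-- Fourth version of Peano's Theorem, part 3 (Peano's characterizations): if the
problem has a strict lower and a strict upper solution on `I = [t0, t0+a]`, then it
has a least solution `φlow` and a greatest solution `φhigh` on `I`, and for each
`t ∈ I`, `φlow t` is the supremum of the values at `t` of all strict lower solutions,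
while `φhigh t` is the infimum of the values at `t` of all strict upper solutions. -/
theorem peano_characterizations (t0 y0 a : ℝ) (ha : 0 < a)
    (f : ℝ → ℝ → ℝ)
    (hf : ContinuousOn (fun p : ℝ × ℝ => f p.1 p.2)
      (Icc t0 (t0 + a) ×ˢ (univ : Set ℝ)))
    (α β : ℝ → ℝ)
    (hα : IsStrictLowerSol t0 y0 a f α) (hβ : IsStrictUpperSol t0 y0 a f β) :
    ∃ φlow φhigh : ℝ → ℝ,
      IsSol18 t0 y0 a f φlow ∧ IsSol18 t0 y0 a f φhigh ∧
      (∀ φ : ℝ → ℝ, IsSol18 t0 y0 a f φ →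
        ∀ t ∈ Icc t0 (t0 + a), φlow t ≤ φ t ∧ φ t ≤ φhigh t) ∧
      (∀ t ∈ Icc t0 (t0 + a),
        φlow t = sSup {x : ℝ | ∃ γ : ℝ → ℝ, IsStrictLowerSol t0 y0 a f γ ∧ x = γ t}) ∧
      (∀ t ∈ Icc t0 (t0 + a),
        φhigh t = sInf {x : ℝ | ∃ γ : ℝ → ℝ, IsStrictUpperSol t0 y0 a f γ ∧ x = γ t}) :=
  peano_characterizations_general t0 y0 a ha.le f α β
    (hf.mono fun _ hp => ⟨hp.1, mem_univ _⟩) hα hβ
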